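/- In Case A, assume P(γ = ∞) = 0, E|L′| < ∞, and ∫_{[0,t_G)} |H(s)| dG(s) < ∞. Then M is a uniformly integrable martingale with E(sup_t |M_t|) = ∞ if and only if lim_{t↑t_G} F(t)Ḡ(t) = 0 and ∫_{[0,t_G)} Ḡ(s)·|dF/dG(s)| dG(s) = ∞. -/

import Mathlib

open MeasureTheory Filter Set Topology
open scoped ENNReal NNReal Classical

noncomputable section

namespace SingleJump

variable {Ω : Type*}

/-- The event `{γ > t}`. -/
def jumpSet (γ : Ω → ℝ≥0∞) (t : ℝ≥0) : Set Ω := {ω | (t : ℝ≥0∞) < γ ω}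

/-- The collection `𝒻_t` of the single jump filtration generated by `γ` and the σ-field `m`:
`A ∈ 𝒻_t` iff `A` is `m`-measurable and `A ∩ {γ > t}` is either `∅` or `{γ > t}`. -/
def jumpColl (m : MeasurableSpace Ω) (γ : Ω → ℝ≥0∞) (t : ℝ≥0) : Set (Set Ω) :=
  {A | MeasurableSet[m] A ∧ (A ∩ jumpSet γ t = ∅ ∨ A ∩ jumpSet γ t = jumpSet γ t)}

/-- `𝒻_t` as a σ-field (the collection `jumpColl` generates itself, see Proposition 1(i)). -/
def jumpσ (m : MeasurableSpace Ω) (γ : Ω → ℝ≥0∞) (t : ℝ≥0) : MeasurableSpace Ω :=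
  MeasurableSpace.generateFrom (jumpColl m γ t)

/-- `𝒻_∞ = σ(⋃_{t ∈ ℝ₊} 𝒻_t)`. -/
def jumpσInf (m : MeasurableSpace Ω) (γ : Ω → ℝ≥0∞) : MeasurableSpace Ω :=
  ⨆ t : ℝ≥0, jumpσ m γ t

/-- A real function on `ℝ≥0` is càdlàg: right-continuous everywhere, finite left limits. -/
def Cadlag (f : ℝ≥0 → ℝ) : Prop :=
  (∀ t, ContinuousWithinAt f (Ici t) t) ∧
    ∀ t : ℝ≥0, 0 < t → ∃ c : ℝ, Tendsto f (𝓝[<] t) (𝓝 c)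

/-- The filter of times `t ∈ ℝ≥0` with `t ↑ a` strictly from the left (this is `atTop`
when `a = ∞`). -/
def leftF (a : ℝ≥0∞) : Filter ℝ≥0 := Filter.comap (fun t : ℝ≥0 => (t : ℝ≥0∞)) (𝓝[<] a)

/-- Total variation of `f` over `[0,∞)`, including `|f 0|` (the paper's convention `Var`). -/
def totalVar (f : ℝ≥0 → ℝ) : ℝ≥0∞ := (‖f 0‖₊ : ℝ≥0∞) + eVariationOn f Set.univ

/-- The process `M` stopped at the (possibly infinite) random time `T`. -/
def stopped (M : ℝ≥0 → Ω → ℝ) (T : Ω → ℝ≥0∞) : ℝ≥0 → Ω → ℝ :=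
  fun t ω => M (((t : ℝ≥0∞) ⊓ T ω).toNNReal) ω

section WithMeasurableSpace

variable [m : MeasurableSpace Ω]

/-- `Ḡ(t) = 1 - G(t) = P(γ > t)`. -/
def Gbar (μ : Measure Ω) (γ : Ω → ℝ≥0∞) (t : ℝ≥0) : ℝ :=
  (μ {ω | (t : ℝ≥0∞) < γ ω}).toReal

/-- `Ḡ(t-) = P(γ ≥ t)`, the left-hand limit of `Ḡ` at `t`. -/
def GbarLeft (μ : Measure Ω) (γ : Ω → ℝ≥0∞) (t : ℝ≥0) : ℝ :=
  (μ {ω | (t : ℝ≥0∞) ≤ γ ω}).toReal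

/-- `t_G = sup {t ∈ ℝ₊ : G(t) < 1}`, the right endpoint of the law of `γ`. -/
def tG (μ : Measure Ω) (γ : Ω → ℝ≥0∞) : ℝ≥0∞ :=
  sSup ((fun t : ℝ≥0 => (t : ℝ≥0∞)) '' {t : ℝ≥0 | μ {ω | γ ω ≤ (t : ℝ≥0∞)} < 1})

/-- `𝒯 = {t ∈ ℝ₊ : P(γ ≥ t) > 0}`. -/
def TT (μ : Measure Ω) (γ : Ω → ℝ≥0∞) : Set ℝ≥0 :=
  {t | 0 < μ {ω | (t : ℝ≥0∞) ≤ γ ω}}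

/-- Case A: `P(γ = t_G < ∞) = 0`. -/
def CaseA (μ : Measure Ω) (γ : Ω → ℝ≥0∞) : Prop :=
  μ {ω | γ ω = tG μ γ ∧ tG μ γ < ⊤} = 0

/-- Case B: `P(γ = t_G < ∞) > 0`. -/
def CaseB (μ : Measure Ω) (γ : Ω → ℝ≥0∞) : Prop :=
  0 < μ {ω | γ ω = tG μ γ ∧ tG μ γ < ⊤}

/-- `z ∈ L¹_loc(dG)` : `z` is Borel and `∫_{[0,t]} |z(s)| dG(s) < ∞` for every `t ∈ 𝒯`,
where `dG` is the law of `γ` (a measure on `[0,∞]`). -/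
def MemL1loc (μ : Measure Ω) (γ : Ω → ℝ≥0∞) (z : ℝ≥0 → ℝ) : Prop :=
  Measurable z ∧ ∀ t ∈ TT μ γ,
    IntegrableOn (fun x : ℝ≥0∞ => z x.toNNReal) (Icc 0 (t : ℝ≥0∞)) (μ.map γ)

/-- `F loc≪ G` with density `z = dF/dG` : `F(t) = F(0) + ∫_(0,t] z(s) dG(s)` for `t < t_G`. -/
def LocAC (μ : Measure Ω) (γ : Ω → ℝ≥0∞) (F z : ℝ≥0 → ℝ) : Prop :=
  MemL1loc μ γ z ∧ ∀ t : ℝ≥0, (t : ℝ≥0∞) < tG μ γ →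
    F t = F 0 + ∫ x in Ioc (0 : ℝ≥0∞) (t : ℝ≥0∞), z x.toNNReal ∂(μ.map γ)

/-- Condition M for the pair `(F, H)`. -/
def CondM (μ : Measure Ω) (γ : Ω → ℝ≥0∞) (F H : ℝ≥0 → ℝ) : Prop :=
  (∃ z, LocAC μ γ F z) ∧ MemL1loc μ γ H ∧
  (∀ t : ℝ≥0, (t : ℝ≥0∞) < tG μ γ →
    F t * Gbar μ γ t + ∫ x in Ioc (0 : ℝ≥0∞) (t : ℝ≥0∞), H x.toNNReal ∂(μ.map γ)
      = F 0 * Gbar μ γ 0) ∧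
  (CaseB μ γ → Tendsto F (leftF (tG μ γ)) (𝓝 (H (tG μ γ).toNNReal)))

/-- A stopping time of the single jump filtration: `{T ≤ t} ∈ 𝒻_t` for all `t ∈ ℝ₊`. -/
def IsSJStoppingTime (γ : Ω → ℝ≥0∞) (T : Ω → ℝ≥0∞) : Prop :=
  ∀ t : ℝ≥0, {ω | T ω ≤ (t : ℝ≥0∞)} ∈ jumpColl m γ t

/-- The martingale property on a set `S` of times, w.r.t. the single jump filtration. -/
def MartingaleOn (μ : Measure Ω) (γ : Ω → ℝ≥0∞) (M : ℝ≥0 → Ω → ℝ) (S : Set ℝ≥0) : Prop :=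
  (∀ t ∈ S, Measurable[jumpσ m γ t] (M t)) ∧ (∀ t ∈ S, Integrable (M t) μ) ∧
    ∀ s ∈ S, ∀ t ∈ S, s ≤ t → μ[M t|jumpσ m γ s] =ᵐ[μ] M s

/-- A uniformly integrable martingale w.r.t. the single jump filtration. -/
def UIMartingale (μ : Measure Ω) (γ : Ω → ℝ≥0∞) (M : ℝ≥0 → Ω → ℝ) : Prop :=
  MartingaleOn μ γ M Set.univ ∧ UniformIntegrable M 1 μ

/-- A local martingale w.r.t. the single jump filtration: adapted, a.s. càdlàg paths, and
there are stopping times `T n ↑ ∞` a.s. with each stopped process a UI martingale. -/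
def LocalMartingale (μ : Measure Ω) (γ : Ω → ℝ≥0∞) (M : ℝ≥0 → Ω → ℝ) : Prop :=
  (∀ t : ℝ≥0, Measurable[jumpσ m γ t] (M t)) ∧
  (∀ᵐ ω ∂μ, Cadlag fun t => M t ω) ∧
  ∃ T : ℕ → Ω → ℝ≥0∞,
    (∀ n, IsSJStoppingTime γ (T n)) ∧
    (∀ᵐ ω ∂μ, Monotone (fun n => T n ω) ∧ Tendsto (fun n => T n ω) atTop (𝓝 (⊤ : ℝ≥0∞))) ∧
    ∀ n, UIMartingale μ γ (stopped M (T n))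

/-- `E[L' | γ] = 0` for a (possibly only locally integrable) random variable `L'`. -/
def CondZeroGivenGamma (μ : Measure Ω) (γ : Ω → ℝ≥0∞) (L' : Ω → ℝ) : Prop :=
  ∀ B : Set ℝ≥0∞, MeasurableSet B → IntegrableOn L' (γ ⁻¹' B) μ →
    ∫ ω in γ ⁻¹' B, L' ω ∂μ = 0


/-- `γ < t_G` almost surely in Case A with `P(γ = ∞) = 0`. -/
lemma ae_lt_tG (μ : Measure Ω) [IsProbabilityMeasure μ] (γ : Ω → ℝ≥0∞) (hγ : Measurable γ)
    (hA : CaseA μ γ) (hfin : μ {ω | γ ω = ⊤} = 0) : ∀ᵐ ω ∂μ, γ ω < tG μ γ := by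
  have hfin' : ∀ᵐ ω ∂μ, γ ω ≠ ⊤ := by
    rw [ae_iff]; simpa using hfin
  rcases eq_or_ne (tG μ γ) ⊤ with h | h
  · filter_upwards [hfin'] with ω hω
    rw [h]; exact lt_top_iff_ne_top.2 hω
  have h1 : ∀ᵐ ω ∂μ, γ ω ≠ tG μ γ := by
    have := hA
    unfold CaseA at this
    rw [ae_iff]
    convert this using 2
    ext ω
    simp [lt_top_iff_ne_top, h]
  have h2 : ∀ᵐ ω ∂μ, γ ω ≤ tG μ γ := by
    have key : ∀ q : ℚ, tG μ γ < (Real.toNNReal q : ℝ≥0∞) →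
        ∀ᵐ ω ∂μ, γ ω ≤ (Real.toNNReal q : ℝ≥0∞) := by
      intro q hq
      by_contra hcon
      have : μ {ω | γ ω ≤ (Real.toNNReal q : ℝ≥0∞)} < 1 := by
        refine lt_of_le_of_ne prob_le_one ?_
        intro h1
        exact hcon ((mem_ae_iff_prob_eq_one (measurableSet_le hγ measurable_const)).2 h1)
      have h3 : ((Real.toNNReal q : ℝ≥0) : ℝ≥0∞) ≤ tG μ γ := le_sSup ⟨_, this, rfl⟩
      exact absurd h3 (not_le.2 hq)
    · filter_upwards [ae_all_iff.2 fun q : ℚ => (show ∀ᵐ ω ∂μ, tG μ γ < (Real.toNNReal q : ℝ≥0∞) →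
        γ ω ≤ (Real.toNNReal q : ℝ≥0∞) from by
          rw [eventually_imp_distrib_left]; exact key q)] with ω hω
      by_contra hcon
      obtain ⟨q, _, hq1, hq2⟩ := ENNReal.lt_iff_exists_rat_btwn.1 (not_le.1 hcon)
      exact absurd (hω q hq1) (not_le.2 hq2)
  filter_upwards [h1, h2] with ω a b using lt_of_le_of_ne b a

lemma Gbar_pos (μ : Measure Ω) [IsProbabilityMeasure μ] (γ : Ω → ℝ≥0∞) (hγ : Measurable γ)
    {t : ℝ≥0∞} (ht : t < tG μ γ) : 0 < μ {ω | t < γ ω} := by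
  obtain ⟨_, ⟨s, hs, rfl⟩, hts⟩ := lt_sSup_iff.1 ht
  rw [pos_iff_ne_zero]
  intro h0
  have h1 : μ {ω | γ ω ≤ t} = 1 := by
    have := prob_compl_eq_one_iff (μ := μ) (measurableSet_lt (measurable_const (a := t)) hγ)
    rw [← this.2 h0]
    congr 1
    ext ω
    simp
  have : μ {ω | γ ω ≤ t} ≤ μ {ω | γ ω ≤ (s : ℝ≥0∞)} :=
    measure_mono fun ω hω => le_trans hω hts.le
  rw [h1] at this
  exact absurd hs (not_lt.2 this)

lemma mem_TT (μ : Measure Ω) [IsProbabilityMeasure μ] (γ : Ω → ℝ≥0∞) (hγ : Measurable γ)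
    {t : ℝ≥0} (ht : (t : ℝ≥0∞) < tG μ γ) : t ∈ TT μ γ :=
  lt_of_lt_of_le (Gbar_pos μ γ hγ ht) (measure_mono fun _ hω => le_of_lt (mem_ofPred.1 hω))

lemma tG_pos (μ : Measure Ω) [IsProbabilityMeasure μ] (γ : Ω → ℝ≥0∞)
    (h : ∀ᵐ ω ∂μ, γ ω < tG μ γ) : 0 < tG μ γ := by
  by_contra hcon
  have h0 : tG μ γ = 0 := by simpa using hcon
  obtain ⟨ω, hω⟩ := h.exists
  rw [h0] at hω
  simp at hω

lemma leftF_neBot {a : ℝ≥0∞} (ha : 0 < a) : (leftF a).NeBot := by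
  unfold leftF
  rw [comap_neBot_iff]
  intro s hs
  obtain ⟨l, hl, hs'⟩ := (mem_nhdsLT_iff_exists_Ioo_subset' ha).1 hs
  obtain ⟨x, hx1, hx2⟩ := ENNReal.lt_iff_exists_nnreal_btwn.1 hl
  exact ⟨x, hs' ⟨hx1, hx2⟩⟩

lemma leftF_eventually {a : ℝ≥0∞} {p : ℝ≥0∞ → Prop} (h : ∀ᶠ x in 𝓝[<] a, p x) :
    ∀ᶠ t : ℝ≥0 in leftF a, p t := by
  unfold leftF
  exact h.comap _

/-- integral of an integrable function vanishing on all `Iic`. -/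
lemma ae_zero_of_Iic (ν : Measure ℝ≥0∞) [IsFiniteMeasure ν] (h : ℝ≥0∞ → ℝ) (hh : Integrable h ν)
    (h0 : ∀ a, ∫ x in Iic a, h x ∂ν = 0) : h =ᵐ[ν] 0 := by
  have huniv : ∫ x, h x ∂ν = 0 := by
    have := h0 ⊤
    rwa [Iic_top, setIntegral_univ] at this
  refine hh.ae_eq_zero_of_forall_setIntegral_eq_zero fun s hs _ => ?_
  refine MeasurableSpace.induction_on_inter (C := fun s _ => ∫ x in s, h x ∂ν = 0)
    ((BorelSpace.measurable_eq (α := ℝ≥0∞)).trans (borel_eq_generateFrom_Iic _))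
    isPiSystem_Iic (by simp) ?_ ?_ ?_ s hs
  · rintro _ ⟨a, rfl⟩; exact h0 a
  · intro t ht h1
    have := integral_add_compl ht hh
    rw [h1, huniv] at this
    simpa using this
  · intro f hd hf h1
    rw [integral_iUnion hf hd hh.integrableOn]
    simp [h1]

lemma fubini_core (ν : Measure ℝ≥0∞) [IsFiniteMeasure ν] (z : ℝ≥0∞ → ℝ) (t : ℝ≥0∞)
    (hz : IntegrableOn z (Ioc 0 t) ν) :
    IntegrableOn (fun x => z x * ν.real (Ioc x t)) (Ioc 0 t) ν ∧
    IntegrableOn (fun u => ∫ s in Ioo 0 u, z s ∂ν) (Ioc 0 t) ν ∧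
    ∫ x in Ioc 0 t, z x * ν.real (Ioc x t) ∂ν = ∫ u in Ioc 0 t, ∫ s in Ioo 0 u, z s ∂ν ∂ν := by
  set ρ := ν.restrict (Ioc 0 t) with hρ
  let f : ℝ≥0∞ → ℝ≥0∞ → ℝ := fun x u => (Ioi x).indicator (fun _ => z x) u
  have hint : Integrable (Function.uncurry f) (ρ.prod ρ) := by
    have h1 : Integrable (fun p : ℝ≥0∞ × ℝ≥0∞ => z p.1) (ρ.prod ρ) :=
      hz.comp_fst ρ
    have := h1.indicator (s := {p : ℝ≥0∞ × ℝ≥0∞ | p.1 < p.2})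
      (measurableSet_lt measurable_fst measurable_snd)
    refine this.congr (Eventually.of_forall ?_)
    rintro ⟨x, u⟩
    simp only [f, Function.uncurry, indicator, mem_Ioi, mem_ofPred_eq]
  have e1 : ∀ x ∈ Ioc 0 t, ∫ u, f x u ∂ρ = z x * ν.real (Ioc x t) := by
    intro x hx
    simp only [f]
    rw [integral_indicator measurableSet_Ioi, setIntegral_const, smul_eq_mul, mul_comm, hρ,
      measureReal_restrict_apply measurableSet_Ioi]
    congr 2
    ext y
    simp only [mem_inter_iff, mem_Ioi, mem_Ioc]
    constructor
    · rintro ⟨a, b, c⟩; exact ⟨a, c⟩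
    · rintro ⟨a, b⟩; exact ⟨a, hx.1.trans a, b⟩
  have e2 : ∀ u ∈ Ioc 0 t, ∫ x, f x u ∂ρ = ∫ s in Ioo 0 u, z s ∂ν := by
    intro u hu
    have : (fun x => f x u) = (Iio u).indicator z := by
      ext x; simp only [f, indicator, mem_Ioi, mem_Iio]
    rw [this, integral_indicator measurableSet_Iio, hρ, Measure.restrict_restrict measurableSet_Iio]
    congr 2
    ext y
    simp only [mem_inter_iff, mem_Iio, mem_Ioc, mem_Ioo]
    constructor
    · rintro ⟨a, b, c⟩; exact ⟨b, a⟩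
    · rintro ⟨a, b⟩; exact ⟨b, a, b.le.trans hu.2⟩
  refine ⟨?_, ?_, ?_⟩
  · refine Integrable.congr hint.integral_prod_left ?_
    exact (ae_restrict_iff' measurableSet_Ioc).2 (Eventually.of_forall e1)
  · refine Integrable.congr hint.integral_prod_right ?_
    exact (ae_restrict_iff' measurableSet_Ioc).2 (Eventually.of_forall e2)
  · rw [← setIntegral_congr_fun measurableSet_Ioc e1, ← setIntegral_congr_fun measurableSet_Ioc e2]
    exact integral_integral_swap hint

lemma real_split (ν : Measure ℝ≥0∞) [IsFiniteMeasure ν] {x t : ℝ≥0∞} (h : x ≤ t) :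
    ν.real (Ioi x) = ν.real (Ioc x t) + ν.real (Ioi t) := by
  rw [← Ioc_union_Ioi_eq_Ioi h]
  refine measureReal_union ?_ measurableSet_Ioi
  exact Set.disjoint_left.2 fun y hy hy' => absurd hy.2 (not_le.2 hy')

lemma density_eq (μ : Measure Ω) [IsProbabilityMeasure μ] (γ : Ω → ℝ≥0∞) (hγ : Measurable γ)
    (F H z : ℝ≥0 → ℝ) (hz : LocAC μ γ F z) (hH : MemL1loc μ γ H)
    (hFH : ∀ t : ℝ≥0, (t : ℝ≥0∞) < tG μ γ →
    F t * Gbar μ γ t + ∫ x in Ioc (0 : ℝ≥0∞) (t : ℝ≥0∞), H x.toNNReal ∂(μ.map γ)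
      = F 0 * Gbar μ γ 0) :
    ∀ᵐ x ∂((μ.map γ).restrict (Ioo 0 (tG μ γ))), Gbar μ γ x.toNNReal * z x.toNNReal =
      F 0 + ∫ s in Ioo 0 x, z s.toNNReal ∂(μ.map γ) - H x.toNNReal := by
  set ν := μ.map γ with hν
  have : IsProbabilityMeasure ν := Measure.isProbabilityMeasure_map hγ.aemeasurable
  have hG : ∀ t : ℝ≥0, Gbar μ γ t = ν.real (Ioi (t : ℝ≥0∞)) := by
    intro t
    rw [Measure.real, hν, Measure.map_apply hγ measurableSet_Ioi]
    rfl
  let h : ℝ≥0∞ → ℝ := fun x => Gbar μ γ x.toNNReal * z x.toNNReal -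
      (F 0 + ∫ s in Ioo 0 x, z s.toNNReal ∂ν) + H x.toNNReal
  have key : ∀ t : ℝ≥0, (t : ℝ≥0∞) < tG μ γ → IntegrableOn h (Ioc 0 (t : ℝ≥0∞)) ν ∧
      ∫ x in Ioc 0 (t : ℝ≥0∞), h x ∂ν = 0 := by
    intro t ht
    have hT := mem_TT μ γ hγ ht
    have hz1 : IntegrableOn (fun x : ℝ≥0∞ => z x.toNNReal) (Ioc 0 (t : ℝ≥0∞)) ν :=
      (hz.1.2 t hT).mono_set Ioc_subset_Icc_self
    have hH1 : IntegrableOn (fun x : ℝ≥0∞ => H x.toNNReal) (Ioc 0 (t : ℝ≥0∞)) ν :=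
      (hH.2 t hT).mono_set Ioc_subset_Icc_self
    obtain ⟨i1, i2, e⟩ := fubini_core ν (fun x : ℝ≥0∞ => z x.toNNReal) t hz1
    have hsplit : ∀ x ∈ Ioc 0 (t : ℝ≥0∞), Gbar μ γ x.toNNReal * z x.toNNReal =
        z x.toNNReal * ν.real (Ioc x t) + z x.toNNReal * Gbar μ γ t := by
      intro x hx
      have hx' : x ≠ ⊤ := ne_top_of_le_ne_top ENNReal.coe_ne_top hx.2
      rw [hG, hG, ENNReal.coe_toNNReal hx', real_split ν hx.2]
      ring
    have i3 : IntegrableOn (fun x : ℝ≥0∞ => Gbar μ γ x.toNNReal * z x.toNNReal)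
        (Ioc 0 (t : ℝ≥0∞)) ν :=
      (integrableOn_congr_fun hsplit measurableSet_Ioc).2 (i1.add (hz1.mul_const _))
    have i4 : IntegrableOn (fun _ : ℝ≥0∞ => F 0) (Ioc 0 (t : ℝ≥0∞)) ν := integrable_const _
    have e3 : ∫ x in Ioc 0 (t : ℝ≥0∞), Gbar μ γ x.toNNReal * z x.toNNReal ∂ν =
        (∫ u in Ioc 0 (t : ℝ≥0∞), ∫ s in Ioo 0 u, z s.toNNReal ∂ν ∂ν) +
          (F t - F 0) * Gbar μ γ t := by
      rw [setIntegral_congr_fun measurableSet_Ioc hsplit, integral_add i1 (hz1.mul_const _), e,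
        integral_mul_const, hz.2 t ht]
      ring
    refine ⟨(i3.sub (i4.add i2)).add hH1, ?_⟩
    have e4 : ∫ x in Ioc 0 (t : ℝ≥0∞), h x ∂ν =
        (∫ x in Ioc 0 (t : ℝ≥0∞), Gbar μ γ x.toNNReal * z x.toNNReal ∂ν) -
        ((∫ x in Ioc 0 (t : ℝ≥0∞), F 0 ∂ν) +
          ∫ u in Ioc 0 (t : ℝ≥0∞), ∫ s in Ioo 0 u, z s.toNNReal ∂ν ∂ν) +
        ∫ x in Ioc 0 (t : ℝ≥0∞), H x.toNNReal ∂ν := by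
      have a1 := integral_add i4 i2
      have a2 := integral_sub i3 (i4.add i2)
      have a3 := integral_add (i3.sub (i4.add i2)) hH1
      simp only [Pi.add_apply, Pi.sub_apply] at a1 a2 a3
      rw [← a1, ← a2, ← a3]
    have e5 : Gbar μ γ 0 = ν.real (Ioc 0 (t : ℝ≥0∞)) + Gbar μ γ t := by
      rw [hG, hG, ENNReal.coe_zero, real_split ν (zero_le (a := (t : ℝ≥0∞)))]
    rw [e4, e3, setIntegral_const, smul_eq_mul]
    have := hFH t ht
    rw [e5] at this
    linarith
  have key2 : ∀ t : ℝ≥0, (t : ℝ≥0∞) < tG μ γ → ∀ᵐ x ∂ν, x ∈ Ioc 0 (t : ℝ≥0∞) → h x = 0 := by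
    intro t ht
    rw [← ae_restrict_iff' measurableSet_Ioc]
    refine ae_zero_of_Iic _ h (key t ht).1 fun a => ?_
    rw [Measure.restrict_restrict measurableSet_Iic]
    have : Iic a ∩ Ioc 0 (t : ℝ≥0∞) = Ioc 0 ((min a t).toNNReal : ℝ≥0∞) := by
      rw [ENNReal.coe_toNNReal (ne_top_of_le_ne_top ENNReal.coe_ne_top (min_le_right _ _))]
      ext y
      simp only [mem_inter_iff, mem_Iic, mem_Ioc, le_min_iff]
      tauto
    rw [this]
    refine (key _ ?_).2
    rw [ENNReal.coe_toNNReal (ne_top_of_le_ne_top ENNReal.coe_ne_top (min_le_right _ _))]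
    exact (min_le_right _ _).trans_lt ht
  rw [ae_restrict_iff' measurableSet_Ioo]
  have key3 : ∀ᵐ x ∂ν, ∀ q : ℚ, ((Real.toNNReal q : ℝ≥0) : ℝ≥0∞) < tG μ γ →
      x ∈ Ioc 0 ((Real.toNNReal q : ℝ≥0) : ℝ≥0∞) → h x = 0 := by
    rw [ae_all_iff]
    intro q
    rw [eventually_imp_distrib_left]
    exact key2 _
  filter_upwards [key3] with x hx hx'
  obtain ⟨q, _, hq1, hq2⟩ := ENNReal.lt_iff_exists_rat_btwn.1 hx'.2
  have := hx q hq2 ⟨hx'.1, hq1.le⟩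
  simp only [h] at this
  linarith

lemma Fm_le (μ : Measure Ω) [IsProbabilityMeasure μ] (γ : Ω → ℝ≥0∞) (hγ : Measurable γ)
    (F z : ℝ≥0 → ℝ) (hz : LocAC μ γ F z) {x : ℝ≥0∞} (hx0 : 0 < x) (hx : x < tG μ γ) :
    ‖F 0 + ∫ s in Ioo 0 x, z s.toNNReal ∂(μ.map γ)‖ₑ ≤
      ⨆ t : ℝ≥0, ⨆ (_ : (t : ℝ≥0∞) < x), ‖F t‖ₑ := by
  obtain ⟨u, hu1, hu2, hu3⟩ := exists_seq_strictMono_tendsto' hx0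
  have hux : ∀ n, u n < x := fun n => (hu2 n).2
  have hxT : x ≠ ⊤ := hx.ne_top
  have hU : ⋃ n, Ioc 0 (u n) = Ioo 0 x := by
    ext y
    simp only [mem_iUnion, mem_Ioc, mem_Ioo]
    constructor
    · rintro ⟨n, a, b⟩; exact ⟨a, b.trans_lt (hux n)⟩
    · rintro ⟨a, b⟩
      obtain ⟨n, hn⟩ := (hu3.eventually (lt_mem_nhds b)).exists
      exact ⟨n, a, hn.le⟩
  have hi : IntegrableOn (fun s : ℝ≥0∞ => z s.toNNReal) (Ioo 0 x) (μ.map γ) := by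
    have := hz.1.2 x.toNNReal (mem_TT μ γ hγ (by rwa [ENNReal.coe_toNNReal hxT]))
    rw [ENNReal.coe_toNNReal hxT] at this
    exact this.mono_set Ioo_subset_Icc_self
  have ht := tendsto_setIntegral_of_monotone (μ := μ.map γ) (f := fun s : ℝ≥0∞ => z s.toNNReal)
    (s := fun n => Ioc 0 (u n)) (fun _ => measurableSet_Ioc)
    (fun a b hab => Ioc_subset_Ioc_right (hu1.monotone hab)) (by rw [hU]; exact hi)
  rw [hU] at ht
  refine le_of_tendsto (ht.const_add (F 0)).enorm (Eventually.of_forall fun n => ?_)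
  have hn : ((u n).toNNReal : ℝ≥0∞) = u n := ENNReal.coe_toNNReal ((hux n).trans hx).ne_top
  have := hz.2 (u n).toNNReal (by rw [hn]; exact (hux n).trans hx)
  rw [hn] at this
  rw [← this]
  exact le_iSup₂_of_le (u n).toNNReal (by rw [hn]; exact hux n) le_rfl

lemma jumpσ_le (γ : Ω → ℝ≥0∞) (t : ℝ≥0) : jumpσ m γ t ≤ m :=
  MeasurableSpace.generateFrom_le fun _ hs => hs.1

lemma jumpσ_mono (γ : Ω → ℝ≥0∞) {s t : ℝ≥0} (hst : s ≤ t) : jumpσ m γ s ≤ jumpσ m γ t := by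
  refine MeasurableSpace.generateFrom_mono fun A hA => ⟨hA.1, ?_⟩
  have hsub : jumpSet γ t ⊆ jumpSet γ s := fun ω hω =>
    lt_of_le_of_lt (by exact_mod_cast hst) (mem_ofPred.1 hω)
  rcases hA.2 with h | h
  · left
    exact subset_empty_iff.1 (h ▸ inter_subset_inter_right A hsub)
  · right
    have : jumpSet γ s ⊆ A := inter_eq_right.1 h
    exact inter_eq_right.2 (hsub.trans this)

lemma measurableSet_jumpσ (γ : Ω → ℝ≥0∞) (t : ℝ≥0) {A : Set Ω}
    (hA : MeasurableSet[jumpσ m γ t] A) :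
    MeasurableSet A ∧ (A ∩ jumpSet γ t = ∅ ∨ jumpSet γ t ⊆ A) := by
  refine ⟨jumpσ_le γ t _ hA, ?_⟩
  refine MeasurableSpace.generateFrom_induction (jumpColl m γ t)
    (fun A _ => A ∩ jumpSet γ t = ∅ ∨ jumpSet γ t ⊆ A) ?_ ?_ ?_ ?_ A hA
  · rintro B hB _
    exact hB.2.imp id inter_eq_right.1
  · left; simp
  · rintro B _ (h | h)
    · right
      intro ω hω hB
      exact (h ▸ (⟨hB, hω⟩ : ω ∈ B ∩ jumpSet γ t) : ω ∈ (∅ : Set Ω))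
    · left
      ext ω
      simp only [mem_inter_iff, mem_compl_iff, mem_empty_iff_false, iff_false]
      exact fun ⟨a, b⟩ => a (h b)
  · intro f _ hf
    by_cases hc : ∃ n, jumpSet γ t ⊆ f n
    · obtain ⟨n, hn⟩ := hc
      exact Or.inr (hn.trans (subset_iUnion f n))
    · left
      rw [iUnion_inter]
      refine iUnion_eq_empty.2 fun n => (hf n).resolve_right fun h => hc ⟨n, h⟩

lemma Gbar_small (μ : Measure Ω) [IsProbabilityMeasure μ] (γ : Ω → ℝ≥0∞) (hγ : Measurable γ)
    (hlt : ∀ᵐ ω ∂μ, γ ω < tG μ γ) {δ : ℝ≥0∞} (hδ : 0 < δ) :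
    ∀ᶠ t : ℝ≥0 in leftF (tG μ γ), μ {ω | (t : ℝ≥0∞) < γ ω} < δ := by
  have h0 := tG_pos μ γ hlt
  refine leftF_eventually (p := fun x => μ {ω | x < γ ω} < δ) ?_
  obtain ⟨u, hu1, hu2, hu3⟩ := exists_seq_strictMono_tendsto' h0
  have ht := tendsto_measure_iInter_atTop (μ := μ) (s := fun n => {ω | u n < γ ω})
    (fun n => (measurableSet_lt measurable_const hγ).nullMeasurableSet)
    (fun a b hab ω hω => lt_of_le_of_lt (hu1.monotone hab) (mem_ofPred.1 hω))
    ⟨0, measure_ne_top _ _⟩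
  have hz : μ (⋂ n, {ω | u n < γ ω}) = 0 := by
    refine measure_mono_null (t := {ω | ¬ γ ω < tG μ γ}) ?_ hlt
    intro ω hω
    simp only [mem_iInter, mem_ofPred_eq] at hω
    simp only [mem_ofPred_eq, not_lt]
    exact le_of_tendsto' hu3 fun n => (hω n).le
  rw [hz] at ht
  obtain ⟨n, hn⟩ := (ht.eventually (gt_mem_nhds hδ)).exists
  filter_upwards [Ioo_mem_nhdsLT (hu2 n).2] with x hx
  exact lt_of_le_of_lt (measure_mono fun ω hω => hx.1.trans (mem_ofPred.1 hω)) hn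

lemma tendsto_of_UI (μ : Measure Ω) [IsProbabilityMeasure μ] (γ : Ω → ℝ≥0∞) (hγ : Measurable γ)
    (hlt : ∀ᵐ ω ∂μ, γ ω < tG μ γ) (M : ℝ≥0 → Ω → ℝ) (F : ℝ≥0 → ℝ)
    (hrepr : ∀ᵐ ω ∂μ, ∀ t : ℝ≥0, (t : ℝ≥0∞) < γ ω → M t ω = F t)
    (hUI : UniformIntegrable M 1 μ) :
    Tendsto (fun t => F t * Gbar μ γ t) (leftF (tG μ γ)) (𝓝 0) := by
  rw [Metric.tendsto_nhds]
  intro ε hε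
  obtain ⟨δ, hδ, h⟩ := hUI.2.1 (half_pos hε)
  filter_upwards [Gbar_small μ γ hγ hlt (ENNReal.ofReal_pos.2 hδ)] with t ht
  have hm : MeasurableSet {ω | (t : ℝ≥0∞) < γ ω} := measurableSet_lt measurable_const hγ
  have h1 := h t _ hm ht.le
  have h2 : eLpNorm ({ω | (t : ℝ≥0∞) < γ ω}.indicator (M t)) 1 μ =
      ‖F t‖ₑ * μ {ω | (t : ℝ≥0∞) < γ ω} := by
    rw [← one_mul (‖F t‖ₑ * _)]
    have : {ω | (t : ℝ≥0∞) < γ ω}.indicator (M t) =ᵐ[μ]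
        {ω | (t : ℝ≥0∞) < γ ω}.indicator (fun _ => F t) := by
      filter_upwards [hrepr] with ω hω
      by_cases hc : (t : ℝ≥0∞) < γ ω
      · simp [indicator, hc, hω t hc]
      · simp [indicator, hc]
    rw [eLpNorm_congr_ae this, eLpNorm_indicator_const hm one_ne_zero ENNReal.one_ne_top]
    simp
  rw [h2] at h1
  have h3 := ENNReal.toReal_mono ENNReal.ofReal_ne_top h1
  rw [ENNReal.toReal_mul, ENNReal.toReal_ofReal (half_pos hε).le, toReal_enorm] at h3
  rw [dist_zero_right, norm_mul, Gbar, Real.norm_of_nonneg ENNReal.toReal_nonneg]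
  linarith

lemma integrable_Hγ (μ : Measure Ω) [IsProbabilityMeasure μ] (γ : Ω → ℝ≥0∞) (hγ : Measurable γ)
    (hlt : ∀ᵐ ω ∂μ, γ ω < tG μ γ) (H : ℝ≥0 → ℝ)
    (hHfin : IntegrableOn (fun x : ℝ≥0∞ => H x.toNNReal) (Iio (tG μ γ)) (μ.map γ)) :
    Integrable (fun x : ℝ≥0∞ => H x.toNNReal) (μ.map γ) ∧
    Integrable (fun ω => H (γ ω).toNNReal) μ := by
  have h1 : (μ.map γ).restrict (Iio (tG μ γ)) = μ.map γ :=
    Measure.restrict_eq_self_of_ae_mem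
      ((ae_map_iff hγ.aemeasurable measurableSet_Iio).2 hlt)
  rw [IntegrableOn, h1] at hHfin
  exact ⟨hHfin, hHfin.comp_measurable hγ⟩

lemma sup_finite (μ : Measure Ω) [IsProbabilityMeasure μ] (γ : Ω → ℝ≥0∞) (hγ : Measurable γ)
    (hlt : ∀ᵐ ω ∂μ, γ ω < tG μ γ) (M : ℝ≥0 → Ω → ℝ) (F z : ℝ≥0 → ℝ) (L : Ω → ℝ)
    (hL : Integrable L μ) (hz : LocAC μ γ F z)
    (hrepr : ∀ᵐ ω ∂μ, ∀ t : ℝ≥0,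
      M t ω = if (t : ℝ≥0∞) < γ ω then F t else L ω)
    (hint : IntegrableOn (fun x : ℝ≥0∞ => Gbar μ γ x.toNNReal * z x.toNNReal)
              (Ioo 0 (tG μ γ)) (μ.map γ)) :
    ∫⁻ ω, ⨆ t : ℝ≥0, (‖M t ω‖₊ : ℝ≥0∞) ∂μ < ⊤ := by
  set ν := μ.map γ with hν
  have : IsProbabilityMeasure ν := Measure.isProbabilityMeasure_map hγ.aemeasurable
  have hzm : Measurable z := hz.1.1
  let g : Ω → ℝ≥0∞ → ℝ≥0∞ := fun ω s => (Iio (γ ω)).indicator (fun s => ‖z s.toNNReal‖ₑ) s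
  have hgm : Measurable (Function.uncurry g) := by
    have h1 : Measurable (fun p : Ω × ℝ≥0∞ => ‖z p.2.toNNReal‖ₑ) := by fun_prop
    have h2 := h1.indicator (s := {p : Ω × ℝ≥0∞ | p.2 < γ p.1})
      (measurableSet_lt measurable_snd (hγ.comp measurable_fst))
    convert h2 using 1
    ext ⟨ω, u⟩
    simp only [g, Function.uncurry, indicator, mem_Iio, mem_ofPred_eq]
  set ρ := ν.restrict (Ioo 0 (tG μ γ)) with hρ
  have hbound : ∀ᵐ ω ∂μ, (⨆ t : ℝ≥0, (‖M t ω‖₊ : ℝ≥0∞)) ≤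
      (‖F 0‖ₑ + ‖L ω‖ₑ) + ∫⁻ s, g ω s ∂ρ := by
    filter_upwards [hrepr, hlt] with ω hω hω2
    refine iSup_le fun t => ?_
    rw [hω t]
    split_ifs with hc
    · change ‖F t‖ₑ ≤ _
      rw [hz.2 t (hc.trans hω2)]
      refine (enorm_add_le _ _).trans ?_
      refine add_le_add le_self_add ?_
      refine (enorm_integral_le_lintegral_enorm _).trans ?_
      simp only [g]
      rw [lintegral_indicator measurableSet_Iio, hρ, Measure.restrict_restrict measurableSet_Iio]
      refine lintegral_mono_set fun s hs => ?_
      exact ⟨hs.2.trans_lt hc, hs.1, hs.2.trans_lt (hc.trans hω2)⟩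
    · change ‖L ω‖ₑ ≤ _
      exact le_add_self.trans le_self_add
  refine (lintegral_mono_ae hbound).trans_lt ?_
  rw [lintegral_add_left' (by fun_prop), lintegral_add_left measurable_const, lintegral_const,
    lintegral_lintegral_swap hgm.aemeasurable]
  refine ENNReal.add_lt_top.2 ⟨ENNReal.add_lt_top.2 ⟨by simp [ENNReal.mul_lt_top_iff], hL.2⟩, ?_⟩
  have : ∀ s ∈ Ioo 0 (tG μ γ), ∫⁻ ω, g ω s ∂μ = ‖Gbar μ γ s.toNNReal * z s.toNNReal‖ₑ := by
    intro s hs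
    have : (fun ω => g ω s) = {ω | s < γ ω}.indicator (fun _ => ‖z s.toNNReal‖ₑ) := by
      ext ω
      simp only [g, indicator, mem_Iio, mem_ofPred_eq]
    rw [this, lintegral_indicator (measurableSet_lt measurable_const hγ), setLIntegral_const,
      enorm_mul, mul_comm]
    congr 1
    rw [Gbar, ENNReal.coe_toNNReal hs.2.ne_top, Real.enorm_eq_ofReal ENNReal.toReal_nonneg,
      ENNReal.ofReal_toReal (measure_ne_top _ _)]
  rw [hρ, setLIntegral_congr_fun measurableSet_Ioo this]
  exact hint.2

lemma integrable_of_sup (μ : Measure Ω) [IsProbabilityMeasure μ] (γ : Ω → ℝ≥0∞) (hγ : Measurable γ)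
    (hlt : ∀ᵐ ω ∂μ, γ ω < tG μ γ) (M : ℝ≥0 → Ω → ℝ) (F H z : ℝ≥0 → ℝ)
    (hz : LocAC μ γ F z) (hH : MemL1loc μ γ H)
    (hFH : ∀ t : ℝ≥0, (t : ℝ≥0∞) < tG μ γ →
    F t * Gbar μ γ t + ∫ x in Ioc (0 : ℝ≥0∞) (t : ℝ≥0∞), H x.toNNReal ∂(μ.map γ)
      = F 0 * Gbar μ γ 0)
    (hHi : Integrable (fun x : ℝ≥0∞ => H x.toNNReal) (μ.map γ))
    (hrepr : ∀ᵐ ω ∂μ, ∀ t : ℝ≥0, (t : ℝ≥0∞) < γ ω → M t ω = F t)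
    (hsup : ∫⁻ ω, ⨆ t : ℝ≥0, (‖M t ω‖₊ : ℝ≥0∞) ∂μ < ⊤) :
    IntegrableOn (fun x : ℝ≥0∞ => Gbar μ γ x.toNNReal * z x.toNNReal)
              (Ioo 0 (tG μ γ)) (μ.map γ) := by
  have hzm : Measurable z := hz.1.1
  have hHm : Measurable H := hH.1
  have hGm : Measurable (Gbar μ γ) := by
    refine Antitone.measurable fun a b hab => ?_
    refine ENNReal.toReal_mono (measure_ne_top _ _) (measure_mono fun ω hω => ?_)
    exact lt_of_le_of_lt (by exact_mod_cast hab) (mem_ofPred.1 hω)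
  refine ⟨by fun_prop, ?_⟩
  set ν := μ.map γ with hν
  let S : ℝ≥0∞ → ℝ≥0∞ := (Ioo 0 (tG μ γ)).indicator
    (fun x => ‖F 0 + ∫ s in Ioo 0 x, z s.toNNReal ∂ν‖ₑ)
  have h1 : ∫⁻ x in Ioo 0 (tG μ γ), ‖F 0 + ∫ s in Ioo 0 x, z s.toNNReal ∂ν‖ₑ ∂ν < ⊤ := by
    rw [← lintegral_indicator measurableSet_Ioo]
    refine (lintegral_map_le _ _).trans_lt ((lintegral_mono_ae ?_).trans_lt hsup)
    filter_upwards [hrepr, hlt] with ω hω hω2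
    by_cases hc : γ ω ∈ Ioo 0 (tG μ γ)
    · rw [indicator_of_mem hc]
      refine (Fm_le μ γ hγ F z hz hc.1 hc.2).trans (iSup₂_le fun t ht => ?_)
      refine le_iSup_of_le t ?_
      rw [hω t ht]
      rfl
    · rw [indicator_of_notMem hc]
      exact zero_le
  have h2 : ∫⁻ x in Ioo 0 (tG μ γ), ‖H x.toNNReal‖ₑ ∂ν < ⊤ := hHi.integrableOn.2
  have h3 : ∫⁻ x in Ioo 0 (tG μ γ), ‖Gbar μ γ x.toNNReal * z x.toNNReal‖ₑ ∂ν ≤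
      ∫⁻ x in Ioo 0 (tG μ γ), (‖F 0 + ∫ s in Ioo 0 x, z s.toNNReal ∂ν‖ₑ + ‖H x.toNNReal‖ₑ) ∂ν := by
    refine lintegral_mono_ae ?_
    filter_upwards [density_eq μ γ hγ F H z hz hH hFH] with x hx
    rw [hx]
    exact enorm_sub_le
  refine h3.trans_lt ?_
  rw [lintegral_add_right _ (by fun_prop)]
  exact ENNReal.add_lt_top.2 ⟨h1, h2⟩

lemma condExp_eq (μ : Measure Ω) [IsProbabilityMeasure μ] (γ : Ω → ℝ≥0∞) (hγ : Measurable γ)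
    (M : ℝ≥0 → Ω → ℝ) (F : ℝ≥0 → ℝ) (L : Ω → ℝ)
    (hL : Integrable L μ) (s : ℝ≥0) (hMm : Measurable[jumpσ m γ s] (M s))
    (hrepr : ∀ᵐ ω ∂μ, M s ω = if (s : ℝ≥0∞) < γ ω then F s else L ω)
    (hs : F s * Gbar μ γ s = ∫ ω in {ω | (s : ℝ≥0∞) < γ ω}, L ω ∂μ) :
    M s =ᵐ[μ] μ[L|jumpσ m γ s] := by
  have hm : MeasurableSet {ω | (s : ℝ≥0∞) < γ ω} := measurableSet_lt measurable_const hγ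
  have hMi : Integrable (M s) μ := by
    have h1 : Integrable (fun ω => if (s : ℝ≥0∞) < γ ω then F s else L ω) μ := by
      have := Integrable.piecewise hm (integrable_const (F s)).integrableOn (hL.integrableOn)
      exact this
    refine h1.congr ?_
    filter_upwards [hrepr] with ω hω using hω.symm
  have hz : ∫ ω in {ω | (s : ℝ≥0∞) < γ ω}, M s ω ∂μ =
      ∫ ω in {ω | (s : ℝ≥0∞) < γ ω}, L ω ∂μ := by
    rw [← hs]
    have : ∫ ω in {ω | (s : ℝ≥0∞) < γ ω}, M s ω ∂μ =
        ∫ ω in {ω | (s : ℝ≥0∞) < γ ω}, F s ∂μ := by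
      refine setIntegral_congr_ae hm ?_
      filter_upwards [hrepr] with ω hω hc
      rw [hω, if_pos hc]
    rw [this, setIntegral_const, smul_eq_mul, mul_comm]
    rfl
  have hlow : ∀ B : Set Ω, MeasurableSet B → B ∩ {ω | (s : ℝ≥0∞) < γ ω} = ∅ →
      ∫ ω in B, M s ω ∂μ = ∫ ω in B, L ω ∂μ := by
    intro B hB hBe
    refine setIntegral_congr_ae hB ?_
    filter_upwards [hrepr] with ω hω hc
    rw [hω, if_neg]
    intro h
    exact (hBe ▸ (⟨hc, h⟩ : ω ∈ B ∩ {ω | (s : ℝ≥0∞) < γ ω}) : ω ∈ (∅ : Set Ω))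
  refine ae_eq_condExp_of_forall_setIntegral_eq (jumpσ_le γ s) hL
    (fun _ _ _ => hMi.integrableOn) ?_ hMm.stronglyMeasurable.aestronglyMeasurable
  intro A hA _
  obtain ⟨hA1, h | h⟩ := measurableSet_jumpσ γ s hA
  · exact hlow A hA1 h
  · change {ω | (s : ℝ≥0∞) < γ ω} ⊆ A at h
    have e : A = (A \ {ω | (s : ℝ≥0∞) < γ ω}) ∪ {ω | (s : ℝ≥0∞) < γ ω} :=
      (sdiff_union_of_subset h).symm
    rw [e, setIntegral_union disjoint_sdiff_left hm hMi.integrableOn hMi.integrableOn,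
      setIntegral_union disjoint_sdiff_left hm hL.integrableOn hL.integrableOn, hz,
      hlow _ (hA1.diff hm) (sdiff_inter_self)]

lemma tail_eq (μ : Measure Ω) [IsProbabilityMeasure μ] (γ : Ω → ℝ≥0∞) (hγ : Measurable γ)
    (hlt : ∀ᵐ ω ∂μ, γ ω < tG μ γ) (F H : ℝ≥0 → ℝ) (L' : Ω → ℝ)
    (hL'cond : CondZeroGivenGamma μ γ L') (hL'fin : Integrable L' μ)
    (hFH : ∀ t : ℝ≥0, (t : ℝ≥0∞) < tG μ γ →
    F t * Gbar μ γ t + ∫ x in Ioc (0 : ℝ≥0∞) (t : ℝ≥0∞), H x.toNNReal ∂(μ.map γ)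
      = F 0 * Gbar μ γ 0)
    (hHi : Integrable (fun x : ℝ≥0∞ => H x.toNNReal) (μ.map γ))
    (hHγ : Integrable (fun ω => H (γ ω).toNNReal) μ)
    (hlim : Tendsto (fun t => F t * Gbar μ γ t) (leftF (tG μ γ)) (𝓝 0)) (s : ℝ≥0) :
    F s * Gbar μ γ s =
      ∫ ω in {ω | (s : ℝ≥0∞) < γ ω}, (H (γ ω).toNNReal + L' ω) ∂μ := by
  by_cases hs : (s : ℝ≥0∞) < tG μ γ
  swap
  · have h0 : μ {ω | (s : ℝ≥0∞) < γ ω} = 0 := by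
      refine measure_mono_null (t := {ω | ¬ γ ω < tG μ γ}) ?_ hlt
      intro ω hω
      simp only [mem_ofPred_eq, not_lt] at hω ⊢
      exact (not_lt.1 hs).trans hω.le
    rw [setIntegral_measure_zero _ h0, Gbar, h0]
    simp
  set ν := μ.map γ with hν
  have e1 : ∫ ω in {ω | (s : ℝ≥0∞) < γ ω}, (H (γ ω).toNNReal + L' ω) ∂μ =
      ∫ x in Ioi (s : ℝ≥0∞), H x.toNNReal ∂ν := by
    rw [integral_add hHγ.integrableOn hL'fin.integrableOn]
    have := hL'cond (Ioi (s : ℝ≥0∞)) measurableSet_Ioi hL'fin.integrableOn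
    have h2 : ∫ ω in {ω | (s : ℝ≥0∞) < γ ω}, L' ω ∂μ = 0 := this
    rw [h2, add_zero, hν, setIntegral_map measurableSet_Ioi hHi.aestronglyMeasurable hγ.aemeasurable]
    rfl
  rw [e1]
  have hconst : ∀ t : ℝ≥0, s ≤ t → (t : ℝ≥0∞) < tG μ γ →
      F t * Gbar μ γ t + ∫ x in Ioc (s : ℝ≥0∞) t, H x.toNNReal ∂ν = F s * Gbar μ γ s := by
    intro t hst ht
    have a := hFH t ht
    have b := hFH s hs
    have hst' : (s : ℝ≥0∞) ≤ t := by exact_mod_cast hst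
    rw [← Ioc_union_Ioc_eq_Ioc zero_le hst', setIntegral_union
      (Ioc_disjoint_Ioc_of_le le_rfl) measurableSet_Ioc hHi.integrableOn hHi.integrableOn] at a
    linarith
  have hne := leftF_neBot (tG_pos μ γ hlt)
  have hlim2 : Tendsto (fun t : ℝ≥0 => ∫ x in Ioc (s : ℝ≥0∞) t, H x.toNNReal ∂ν)
      (leftF (tG μ γ)) (𝓝 (∫ x in Ioi (s : ℝ≥0∞), H x.toNNReal ∂ν)) := by
    have hcg : (leftF (tG μ γ)).IsCountablyGenerated := by unfold leftF; infer_instance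
    simp_rw [← integral_indicator measurableSet_Ioc, ← integral_indicator measurableSet_Ioi]
    refine tendsto_integral_filter_of_dominated_convergence (fun x : ℝ≥0∞ => ‖H x.toNNReal‖)
      (Eventually.of_forall fun t => hHi.aestronglyMeasurable.indicator measurableSet_Ioc)
      (Eventually.of_forall fun t => Eventually.of_forall fun x => norm_indicator_le_norm_self _ _)
      hHi.norm ?_
    have hlt' : ∀ᵐ x ∂ν, x < tG μ γ := (ae_map_iff hγ.aemeasurable measurableSet_Iio).2 hlt
    filter_upwards [hlt'] with x hx
    refine tendsto_const_nhds.congr' ?_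
    have : ∀ᶠ t : ℝ≥0 in leftF (tG μ γ), x < t :=
      leftF_eventually (p := fun y => x < y)
        (eventually_nhdsWithin_of_eventually_nhds (lt_mem_nhds hx))
    filter_upwards [this] with t ht
    simp only [indicator, mem_Ioi, mem_Ioc, ht.le, and_true]
  have h3 := hlim.add hlim2
  rw [zero_add] at h3
  refine tendsto_nhds_unique (tendsto_const_nhds.congr' ?_) h3
  have hev : ∀ᶠ t : ℝ≥0 in leftF (tG μ γ), (s : ℝ≥0∞) < t ∧ (t : ℝ≥0∞) < tG μ γ :=
    leftF_eventually (p := fun y => (s : ℝ≥0∞) < y ∧ y < tG μ γ) (Ioo_mem_nhdsLT hs)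
  filter_upwards [hev] with t ht
  exact (hconst t (by exact_mod_cast ht.1.le) ht.2).symm

/-- **Theorem 5 (iii.ii), Case A.** Assume `P(γ = ∞) = 0`, `E|L'| < ∞` and
`∫_{[0,t_G)} |H| dG < ∞`. Then `M` is a uniformly integrable martingale with
`E(sup_t |M_t|) = ∞` iff `lim_{t↑t_G} F(t)Ḡ(t) = 0` and
`∫_{[0,t_G)} Ḡ(s)|dF/dG(s)| dG(s) = ∞`. -/
theorem stmt_15
(μ : Measure Ω) [IsProbabilityMeasure μ] (γ : Ω → ℝ≥0∞)
    (hγ : Measurable γ) (hpos : 0 < μ {ω | 0 < γ ω})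
    (M : ℝ≥0 → Ω → ℝ) (F H : ℝ≥0 → ℝ) (L' : Ω → ℝ)
    (hM : LocalMartingale μ γ M)
    (hFH : CondM μ γ F H)
    (hL'meas : Measurable L')
    (hL'int : ∀ t ∈ TT μ γ,
      Integrable (fun ω => ({ω' | γ ω' ≤ (t : ℝ≥0∞)}.indicator L') ω) μ)
    (hL'cond : CondZeroGivenGamma μ γ L')
    (hrepr : ∀ᵐ ω ∂μ, ∀ t : ℝ≥0,
      M t ω = if (t : ℝ≥0∞) < γ ω then F t else H (γ ω).toNNReal + L' ω)
    (hA : CaseA μ γ)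
    (hfin : μ {ω | γ ω = ⊤} = 0)
    (hL'fin : Integrable L' μ)
    (hHfin : IntegrableOn (fun x : ℝ≥0∞ => H x.toNNReal) (Iio (tG μ γ)) (μ.map γ)) :
    (UIMartingale μ γ M ∧ ∫⁻ ω, ⨆ t : ℝ≥0, (‖M t ω‖₊ : ℝ≥0∞) ∂μ = ⊤) ↔
      (Tendsto (fun t => F t * Gbar μ γ t) (leftF (tG μ γ)) (𝓝 0) ∧
        ∀ z : ℝ≥0 → ℝ, LocAC μ γ F z →
          ¬ IntegrableOn (fun x : ℝ≥0∞ => Gbar μ γ x.toNNReal * z x.toNNReal)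
              (Ioo 0 (tG μ γ)) (μ.map γ)) := by
  have hlt := ae_lt_tG μ γ hγ hA hfin
  obtain ⟨⟨z₀, hz₀⟩, hH, hFH3, -⟩ := hFH
  obtain ⟨hHi, hHγ⟩ := integrable_Hγ μ γ hγ hlt H hHfin
  have hL : Integrable (fun ω => H (γ ω).toNNReal + L' ω) μ := hHγ.add hL'fin
  have hrepr' : ∀ᵐ ω ∂μ, ∀ t : ℝ≥0, (t : ℝ≥0∞) < γ ω → M t ω = F t := by
    filter_upwards [hrepr] with ω hω t ht
    rw [hω t, if_pos ht]
  constructor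
  · rintro ⟨hUI, hsup⟩
    refine ⟨tendsto_of_UI μ γ hγ hlt M F hrepr' hUI.2, fun z hz hint => ?_⟩
    exact (sup_finite μ γ hγ hlt M F z _ hL hz hrepr hint).ne hsup
  · rintro ⟨hlim, hnot⟩
    constructor
    · have hce : ∀ s, M s =ᵐ[μ] μ[fun ω => H (γ ω).toNNReal + L' ω|jumpσ m γ s] := fun s =>
        condExp_eq μ γ hγ M F _ hL s (hM.1 s) (hrepr.mono fun ω hω => hω s)
          (tail_eq μ γ hγ hlt F H L' hL'cond hL'fin hFH3 hHi hHγ hlim s)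
      refine ⟨⟨fun t _ => hM.1 t, fun t _ => integrable_condExp.congr (hce t).symm,
        fun s _ t _ hst => ?_⟩, ?_⟩
      · exact (condExp_congr_ae (hce t)).trans
          ((condExp_condExp_of_le (jumpσ_mono γ hst) (jumpσ_le γ t)).trans (hce s).symm)
      · exact (hL.uniformIntegrable_condExp (jumpσ_le γ)).ae_eq fun t => (hce t).symm
    · by_contra hcon
      exact hnot z₀ hz₀ (integrable_of_sup μ γ hγ hlt M F H z₀ hz₀ hH hFH3 hHi hrepr'
        (lt_top_iff_ne_top.2 hcon))

end WithMeasurableSpace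

end SingleJump
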